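/- Consider the affinity dynamics of a single task over N agents (N ≥ 1) with an arbitrary assignment sequence σ. For every cycle k ≥ N − 1, the affinity pressure is nonnegative: AP k ≥ 0. -/

import Mathlib

/-!
Any set of `n ≤ k + 1` agents has total affinity at least `1 + 2 + ⋯ + n` at cycle `k`. Indeed, at
most one of them was just reset to affinity 1; the other `n - 1` had total affinity at least
`1 + 2 + ⋯ + (n - 1)` one cycle earlier, and each of them has gained 1 since. Taking all `N` agents,
the mean affinity is at least `(N + 1) / 2` as soon as `N ≤ k + 1`.
-/

/-- Affinity dynamics of a single task over `N` agents with assignment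
sequence `σ`: initially all affinities are 1; the assigned agent's affinity
is reset to 1, every other agent's affinity is incremented. -/
def affinity {N : ℕ} (σ : ℕ → Fin N) : ℕ → Fin N → ℕ
  | 0, _ => 1
  | k + 1, i => if σ k = i then 1 else affinity σ k i + 1

/-- Affinity pressure of the task at cycle `k`. -/
def AP {N : ℕ} (σ : ℕ → Fin N) (k : ℕ) : ℚ :=
  (∑ i : Fin N, (affinity σ k i : ℚ)) / N - (N + 1) / 2

/-- `σ` is greedy (max-affinity): at every cycle the assigned agent has
maximal affinity. -/
def Greedy {N : ℕ} (σ : ℕ → Fin N) : Prop :=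
  ∀ k i, affinity σ k i ≤ affinity σ k (σ k)

section Affinity

variable {N : ℕ} (σ : ℕ → Fin N)

@[simp]
lemma affinity_zero (i : Fin N) : affinity σ 0 i = 1 := rfl

lemma affinity_succ (k : ℕ) (i : Fin N) :
    affinity σ (k + 1) i = if σ k = i then 1 else affinity σ k i + 1 := rfl

lemma affinity_succ_of_ne {k : ℕ} {i : Fin N} (h : σ k ≠ i) :
    affinity σ (k + 1) i = affinity σ k i + 1 := by
  rw [affinity_succ, if_neg h]

lemma one_le_affinity (k : ℕ) (i : Fin N) : 1 ≤ affinity σ k i := by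
  cases k with
  | zero => simp
  | succ k => rw [affinity_succ]; split_ifs <;> omega

lemma sum_affinity_succ_of_notMem {k : ℕ} {s : Finset (Fin N)} (h : σ k ∉ s) :
    ∑ i ∈ s, affinity σ (k + 1) i = ∑ i ∈ s, affinity σ k i + s.card := by
  have increment : ∀ i ∈ s, affinity σ (k + 1) i = affinity σ k i + 1 := fun i hi =>
    affinity_succ_of_ne σ (ne_of_mem_of_not_mem hi h).symm
  rw [Finset.sum_congr rfl increment, Finset.sum_add_distrib, Finset.card_eq_sum_ones]

end Affinity

lemma exists_mem_notMem_erase {α : Type*} [DecidableEq α] {s : Finset α} (hs : s.Nonempty)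
    (a : α) : ∃ b ∈ s, a ∉ s.erase b := by
  by_cases ha : a ∈ s
  · exact ⟨a, ha, Finset.notMem_erase a s⟩
  · exact hs.imp fun b hb => ⟨hb, fun h => ha (Finset.mem_of_mem_erase h)⟩

lemma card_mul_card_add_one_le_two_mul_sum_affinity {N : ℕ} (σ : ℕ → Fin N) {k : ℕ}
    {s : Finset (Fin N)} (hs : s.card ≤ k + 1) :
    s.card * (s.card + 1) ≤ 2 * ∑ i ∈ s, affinity σ k i := by
  induction k generalizing s with
  | zero =>
    simp only [affinity_zero, Finset.sum_const, smul_eq_mul, mul_one]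
    rw [mul_comm]
    gcongr
    omega
  | succ k ih =>
    obtain rfl | hne := s.eq_empty_or_nonempty
    · simp
    obtain ⟨j, hj, hσ⟩ := exists_mem_notMem_erase hne (σ k)
    have hcard : (s.erase j).card + 1 = s.card := Finset.card_erase_add_one hj
    have previous := ih (s := s.erase j) (by omega)
    have hj_pos := one_le_affinity σ (k + 1) j
    rw [← Finset.add_sum_erase s _ hj, sum_affinity_succ_of_notMem σ hσ, ← hcard]
    linarith

lemma AP_nonneg_iff {N : ℕ} (σ : ℕ → Fin N) (k : ℕ) :
    0 ≤ AP σ k ↔ N * (N + 1) ≤ 2 * ∑ i, affinity σ k i := by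
  have hN_pos : (0 : ℚ) < N := by exact_mod_cast (σ 0).pos
  rw [AP, sub_nonneg, div_le_div_iff₀ two_pos hN_pos, mul_comm, mul_comm _ (2 : ℚ)]
  norm_cast

theorem AP_nonneg {N : ℕ} (hN : 1 ≤ N) (σ : ℕ → Fin N) :
    ∀ k, N - 1 ≤ k → 0 ≤ AP σ k := by
  intro k hk
  rw [AP_nonneg_iff]
  have hcard : (Finset.univ : Finset (Fin N)).card ≤ k + 1 := by
    rw [Finset.card_fin]
    omega
  simpa only [Finset.card_fin] using card_mul_card_add_one_le_two_mul_sum_affinity σ hcard
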